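/- Let n ≥ 3, σ > 0, ρ ∈ (−1/n, 1), and let Z ~ N(μ, σ²Ξ) be an n-dimensional Gaussian random vector, where Ξ is the n×n matrix with diagonal entries 1 and all off-diagonal entries ρ, and suppose Pμ ≠ 0. Then for every λ ∈ [0, ∞), the problem max over θ ∈ S^{n−1} ∩ ⟨𝟙⟩^⊥ of E[T_{χ(Z)}(θ)] − λ·Var(T_{χ(Z)}(θ)) is solved by θ* = χ(μ), independently of λ, and the maximum value equals ϱ_{n−1}(‖Pμ‖/(σ√(1−ρ))) − λ·f_{n−1}(‖Pμ‖/(σ√(1−ρ))). -/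

import Mathlib

open MeasureTheory ProbabilityTheory Matrix

noncomputable section

def euclNorm {n : ℕ} (x : Fin n → ℝ) : ℝ := Real.sqrt (∑ i, x i ^ 2)

def centerMat (n : ℕ) : Matrix (Fin n) (Fin n) ℝ :=
  1 - (n : ℝ)⁻¹ • Matrix.of (fun _ _ => (1 : ℝ))

def chi {n : ℕ} (z : Fin n → ℝ) : Fin n → ℝ :=
  (euclNorm ((centerMat n).mulVec z))⁻¹ • (centerMat n).mulVec z

def meanVec {Ω : Type*} [MeasurableSpace Ω] (P : Measure Ω) {n : ℕ}
    (X : Ω → Fin n → ℝ) : Fin n → ℝ := fun i => ∫ ω, X ω i ∂P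

def covMatrix {Ω : Type*} [MeasurableSpace Ω] (P : Measure Ω) {n : ℕ}
    (X : Ω → Fin n → ℝ) : Matrix (Fin n) (Fin n) ℝ :=
  Matrix.of fun i j => ∫ ω, (X ω i - meanVec P X i) * (X ω j - meanVec P X j) ∂P

def MRL {Ω : Type*} [MeasurableSpace Ω] (P : Measure Ω) {n : ℕ}
    (X : Ω → Fin n → ℝ) : ℝ := euclNorm (meanVec P X)

def MD {Ω : Type*} [MeasurableSpace Ω] (P : Measure Ω) {n : ℕ}
    (X : Ω → Fin n → ℝ) : Fin n → ℝ := (euclNorm (meanVec P X))⁻¹ • meanVec P X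

def stdGaussianPi (n : ℕ) : Measure (Fin n → ℝ) :=
  Measure.pi fun _ => gaussianReal 0 1

def IsGaussianVec {Ω : Type*} [MeasurableSpace Ω] (P : Measure Ω) {n : ℕ}
    (Z : Ω → Fin n → ℝ) (m : Fin n → ℝ) (S : Matrix (Fin n) (Fin n) ℝ) : Prop :=
  ∃ A : Matrix (Fin n) (Fin n) ℝ, A * Aᵀ = S ∧
    Measure.map Z P = Measure.map (fun x => m + A.mulVec x) (stdGaussianPi n)

def ascFact (a : ℝ) (k : ℕ) : ℝ := ∏ i ∈ Finset.range k, (a + i)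

def kummerM (a b z : ℝ) : ℝ := ∑' k : ℕ, (ascFact a k / ascFact b k) * z ^ k / (Nat.factorial k)

def varrho (m : ℕ) (x : ℝ) : ℝ :=
  (Real.Gamma (((m : ℝ) + 1) / 2) / (Real.sqrt 2 * Real.Gamma (((m : ℝ) + 2) / 2))) * x *
    kummerM (1 / 2) (((m : ℝ) + 2) / 2) (-x ^ 2 / 2)

def fFun (m : ℕ) (x : ℝ) : ℝ :=
  1 - (((m : ℝ) - 1) / m) * kummerM 1 ((m : ℝ) / 2 + 1) (-x ^ 2 / 2) - (varrho m x) ^ 2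

def gFun (m : ℕ) (x : ℝ) : ℝ :=
  (1 / (m : ℝ)) * kummerM 1 ((m : ℝ) / 2 + 1) (-x ^ 2 / 2)

def Vmat (n : ℕ) : Matrix (Fin n) (Fin n) ℝ :=
  Matrix.of fun i j =>
    if (j : ℕ) = n - 1 then 1 / Real.sqrt n
    else if (i : ℕ) = (j : ℕ) then
      ((n : ℝ) - 1 - (j : ℕ)) / Real.sqrt (((n : ℝ) - 1 - (j : ℕ)) * ((n : ℝ) - (j : ℕ)))
    else if (j : ℕ) < (i : ℕ) then
      -(1 / Real.sqrt (((n : ℝ) - 1 - (j : ℕ)) * ((n : ℝ) - (j : ℕ))))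
    else 0

def projMat (n : ℕ) : Matrix (Fin n) (Fin n) ℝ :=
  Matrix.diagonal fun i => if (i : ℕ) < n - 1 then 1 else 0

def embedZero {n : ℕ} (v : Fin (n - 1) → ℝ) : Fin n → ℝ :=
  fun i => if h : (i : ℕ) < n - 1 then v ⟨i, h⟩ else 0

def Ximat (n : ℕ) (r : ℝ) : Matrix (Fin n) (Fin n) ℝ :=
  Matrix.of fun i j => if i = j then 1 else r

def stdNormCDF (x : ℝ) : ℝ := (gaussianReal 0 1 (Set.Iic x)).toReal

def thetaTilde : Fin 2 → ℝ := ![Real.sqrt 2 / 2, -(Real.sqrt 2 / 2)]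

/-
Let `τ = σ√(1 - ρ)`. On the hyperplane of centered vectors `PZ / τ` has law `ν + G`, with `G`
standard Gaussian and `ν = Pμ / τ`, so `T_{χ(Z)}(θ)` is distributed as `⟪θ, ν + G⟫ / ‖ν + G‖`.
Writing `s⁻ᵖ` as a Laplace transform and exchanging the integrals reduces the first two moments of
this quotient to Gaussian integrals against `exp (-t ‖ν + G‖²)`; completing the square evaluates
those, and the substitution `u = 2t / (1 + 2t)` turns the remaining integral over `t` into Euler's
integral for Kummer's function. With `m = n - 1`, `r = ‖ν‖` and `c = ⟪θ, ν⟫ / r ∈ [-1, 1]`, the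
objective becomes `ϱ_m(r) c - λ (g_m(r) + (1 - m g_m(r) - ϱ_m(r)²) c²)`.

Its value at `c = 1` exceeds this by
`ϱ_m(r) (1 - c) + λ (ϱ_m(r)² - (1 - m g_m(r))) (1 - c²)`. Since `ϱ_m(r) ≥ 0`, everything rests on
`1 - m g_m(r) ≤ ϱ_m(r)²`. In Euler's representation that inequality compares planar integrals of
`g (x² + y²)` over a disc and of `g (x²) g (y²)` over the square around it, where
`g s = (1 - s) ^ q exp (z s)` satisfies `g (s + t) ≤ g s * g t`.
-/

open scoped RealInnerProductSpace

section Kummer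

variable {a b c : ℝ}

lemma integral_rpow_mul_one_sub_rpow (ha : 0 < a) (hc : 0 < c) :
    ∫ u in Set.Ioo (0 : ℝ) 1, u ^ (a - 1) * (1 - u) ^ (c - 1) = beta a c := by
  rw [beta_eq_betaIntegralReal a c ha hc, ← Complex.ofReal_re (∫ u in Set.Ioo (0 : ℝ) 1, _),
    Complex.betaIntegral, ← integral_Ioc_eq_integral_Ioo,
    ← intervalIntegral.integral_of_le zero_le_one, ← intervalIntegral.integral_ofReal]
  congr 1
  refine intervalIntegral.integral_congr fun u hu => ?_
  rw [Set.uIcc_of_le zero_le_one] at hu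
  rw [Complex.ofReal_mul, Complex.ofReal_cpow hu.1, Complex.ofReal_cpow (sub_nonneg.2 hu.2)]
  push_cast
  rfl

lemma integrableOn_rpow_mul_one_sub_rpow (ha : 0 < a) (hc : 0 < c) :
    IntegrableOn (fun u : ℝ => u ^ (a - 1) * (1 - u) ^ (c - 1)) (Set.Ioo 0 1) := by
  refine Integrable.of_integral_ne_zero ?_
  rw [integral_rpow_mul_one_sub_rpow ha hc]
  exact (beta_pos ha hc).ne'

lemma beta_one_left (hb : 0 < b) : beta 1 b = b⁻¹ := by
  have hΓ := (Real.Gamma_pos_of_pos hb).ne'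
  rw [beta, Real.Gamma_one, add_comm 1 b, Real.Gamma_add_one hb.ne', one_mul,
    div_mul_cancel_right₀ hΓ]

lemma ascFact_pos (ha : 0 < a) (k : ℕ) : 0 < ascFact a k :=
  Finset.prod_pos fun _ _ => by positivity

lemma ascFact_succ_left (a : ℝ) (k : ℕ) : ascFact a (k + 1) = a * ascFact (a + 1) k := by
  rw [ascFact, ascFact, Finset.prod_range_succ', mul_comm, Nat.cast_zero, add_zero]
  congr 1
  refine Finset.prod_congr rfl fun i _ => ?_
  push_cast
  ring

lemma ascFact_one (k : ℕ) : ascFact 1 k = k.factorial := by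
  induction k with
  | zero => simp [ascFact]
  | succ k ih =>
    rw [ascFact, Finset.prod_range_succ, ← ascFact, ih, Nat.factorial_succ]
    push_cast
    ring

lemma Gamma_add_natCast (ha : 0 < a) (k : ℕ) :
    Real.Gamma (a + k) = ascFact a k * Real.Gamma a := by
  induction k with
  | zero => simp [ascFact]
  | succ k ih =>
    rw [Nat.cast_succ, ← add_assoc, Real.Gamma_add_one (by positivity), ih, ascFact, ascFact,
      Finset.prod_range_succ]
    ring

lemma beta_add_natCast_left (ha : 0 < a) (hc : 0 < c) (k : ℕ) :
    beta (a + k) c = beta a c * (ascFact a k / ascFact (a + c) k) := by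
  have hΓ := (Real.Gamma_pos_of_pos (add_pos ha hc)).ne'
  have hasc := (ascFact_pos (add_pos ha hc) k).ne'
  rw [beta, beta, add_right_comm, Gamma_add_natCast ha, Gamma_add_natCast (add_pos ha hc)]
  field_simp

lemma hasSum_beta_mul_kummerM_term (ha : 0 < a) (hab : a < b) (z : ℝ) :
    HasSum (fun k : ℕ => beta a (b - a) * (ascFact a k / ascFact b k * z ^ k / k.factorial))
      (∫ u in Set.Ioo (0 : ℝ) 1, u ^ (a - 1) * (1 - u) ^ (b - a - 1) * Real.exp (z * u)) := by
  have hc : 0 < b - a := sub_pos.2 hab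
  set w : ℝ → ℝ := fun u => u ^ (a - 1) * (1 - u) ^ (b - a - 1) with hw
  have hw_int : IntegrableOn w (Set.Ioo 0 1) := integrableOn_rpow_mul_one_sub_rpow ha hc
  have hexp (x : ℝ) : HasSum (fun k : ℕ => x ^ k / k.factorial) (Real.exp x) := by
    rw [Real.exp_eq_exp_ℝ]
    exact NormedSpace.expSeries_div_hasSum_exp x
  have hterm (k : ℕ) : ∫ u in Set.Ioo (0 : ℝ) 1, w u * ((z * u) ^ k / k.factorial) =
      beta a (b - a) * (ascFact a k / ascFact b k * z ^ k / k.factorial) := by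
    calc ∫ u in Set.Ioo (0 : ℝ) 1, w u * ((z * u) ^ k / k.factorial)
      _ = ∫ u in Set.Ioo (0 : ℝ) 1,
            z ^ k / k.factorial * (u ^ (a + k - 1) * (1 - u) ^ (b - a - 1)) := by
          refine setIntegral_congr_fun measurableSet_Ioo fun u hu => ?_
          simp only [hw]
          rw [add_sub_right_comm, Real.rpow_add hu.1, Real.rpow_natCast, mul_pow]
          ring
      _ = beta a (b - a) * (ascFact a k / ascFact b k * z ^ k / k.factorial) := by
          rw [integral_const_mul, integral_rpow_mul_one_sub_rpow (by positivity) hc,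
            beta_add_natCast_left ha hc, add_sub_cancel]
          ring
  simp_rw [← hterm]
  refine hasSum_integral_of_dominated_convergence (fun k u => ‖w u‖ * (|z| ^ k / k.factorial))
    (fun k => hw_int.aestronglyMeasurable.mul (by fun_prop)) (fun k => ?_) ?_ ?_ ?_
  · refine (ae_restrict_iff' measurableSet_Ioo).2 (.of_forall fun u hu => ?_)
    rw [norm_mul, norm_div, norm_pow, RCLike.norm_natCast, norm_mul z, Real.norm_eq_abs z,
      Real.norm_of_nonneg hu.1.le]
    have hu₀ := hu.1.le
    gcongr
    exact mul_le_of_le_one_right (abs_nonneg z) hu.2.le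
  · exact .of_forall fun u => ((hexp |z|).mul_left _).summable
  · simp_rw [((hexp |z|).mul_left _).tsum_eq]
    exact hw_int.norm.mul_const _
  · exact .of_forall fun u => (hexp (z * u)).mul_left _

lemma integral_rpow_mul_one_sub_rpow_mul_exp (ha : 0 < a) (hab : a < b) (z : ℝ) :
    ∫ u in Set.Ioo (0 : ℝ) 1, u ^ (a - 1) * (1 - u) ^ (b - a - 1) * Real.exp (z * u) =
      beta a (b - a) * kummerM a b z := by
  rw [← (hasSum_beta_mul_kummerM_term ha hab z).tsum_eq, tsum_mul_left, kummerM]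

lemma summable_kummerM_term (ha : 0 < a) (hab : a < b) (z : ℝ) :
    Summable fun k : ℕ => ascFact a k / ascFact b k * z ^ k / k.factorial :=
  (summable_mul_left_iff (beta_pos ha (sub_pos.2 hab)).ne').1
    (hasSum_beta_mul_kummerM_term ha hab z).summable

lemma kummerM_pos (ha : 0 < a) (hab : a < b) (z : ℝ) : 0 < kummerM a b z := by
  refine pos_of_mul_pos_right ?_ (beta_pos ha (sub_pos.2 hab)).le
  rw [← integral_rpow_mul_one_sub_rpow_mul_exp ha hab z]
  have hpos : ∀ u ∈ Set.Ioo (0 : ℝ) 1,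
      0 < u ^ (a - 1) * (1 - u) ^ (b - a - 1) * Real.exp (z * u) := fun u hu =>
    mul_pos (mul_pos (Real.rpow_pos_of_pos hu.1 _) (Real.rpow_pos_of_pos (sub_pos.2 hu.2) _))
      (Real.exp_pos _)
  have hint : IntegrableOn (fun u => u ^ (a - 1) * (1 - u) ^ (b - a - 1) * Real.exp (z * u))
      (Set.Ioo 0 1) :=
    (integrableOn_rpow_mul_one_sub_rpow ha (sub_pos.2 hab)).mul_continuousOn_of_subset
      (by fun_prop) measurableSet_Ioo isCompact_Icc Set.Ioo_subset_Icc_self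
  refine (setIntegral_pos_iff_support_of_nonneg_ae
    ((ae_restrict_iff' measurableSet_Ioo).2 (.of_forall fun u hu => (hpos u hu).le)) hint).2 ?_
  rw [Set.inter_eq_self_of_subset_right fun u hu => Function.mem_support.2 (hpos u hu).ne',
    Real.volume_Ioo]
  norm_num

lemma one_sub_kummerM_one (hb : 1 < b) (z : ℝ) :
    1 - kummerM 1 b z = -z / b * kummerM 1 (b + 1) z := by
  rw [kummerM, (summable_kummerM_term one_pos hb z).tsum_eq_zero_add, kummerM, ← tsum_mul_left,
    show ascFact 1 0 / ascFact b 0 * z ^ 0 / (Nat.factorial 0 : ℝ) = 1 by simp [ascFact],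
    sub_add_cancel_left, ← tsum_neg]
  refine tsum_congr fun k => ?_
  have hb0 : b ≠ 0 := by linarith
  have hasc := (ascFact_pos (by linarith : 0 < b + 1) k).ne'
  rw [ascFact_one, ascFact_one, ascFact_succ_left]
  field_simp
  ring

end Kummer

section DiskSquare

lemma integral_comp_sq_Ioi (g : ℝ → ℝ) :
    ∫ x in Set.Ioi (0 : ℝ), x * g (x ^ 2) = (∫ s in Set.Ioi (0 : ℝ), g s) / 2 := by
  rw [← integral_comp_rpow_Ioi_of_pos (g := g) two_pos, ← integral_div]
  refine setIntegral_congr_fun measurableSet_Ioi fun x _ => ?_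
  norm_num
  ring

lemma integral_comp_sq (g : ℝ → ℝ) :
    ∫ x, g (x ^ 2) = ∫ s in Set.Ioi (0 : ℝ), s ^ (-1 / 2 : ℝ) * g s := by
  have habs := integral_comp_abs (f := fun x => g (x ^ 2))
  simp only [sq_abs] at habs
  rw [habs, mul_comm, ← eq_div_iff two_ne_zero, ← integral_comp_sq_Ioi]
  refine setIntegral_congr_fun measurableSet_Ioi fun x (hx : 0 < x) => ?_
  have hx' : (x ^ 2) ^ (-1 / 2 : ℝ) = x⁻¹ := by
    rw [← Real.rpow_natCast_mul hx.le]
    norm_num [Real.rpow_neg_one]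
  rw [hx', mul_inv_cancel_left₀ hx.ne']

lemma integral_comp_add_sq (g : ℝ → ℝ) :
    ∫ p : ℝ × ℝ, g (p.1 ^ 2 + p.2 ^ 2) = Real.pi * ∫ s in Set.Ioi (0 : ℝ), g s := by
  have hpolar (p : ℝ × ℝ) :
      (polarCoord.symm p).1 ^ 2 + (polarCoord.symm p).2 ^ 2 = p.1 ^ 2 := by
    rw [polarCoord_symm_apply]
    linear_combination p.1 ^ 2 * Real.cos_sq_add_sin_sq p.2
  rw [← integral_comp_polarCoord_symm]
  simp only [hpolar]
  calc ∫ p in polarCoord.target, p.1 • g (p.1 ^ 2)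
    _ = (∫ r in Set.Ioi (0 : ℝ), r * g (r ^ 2)) *
          ∫ _ in Set.Ioo (-Real.pi) Real.pi, (1 : ℝ) := by
        rw [← setIntegral_prod_mul, polarCoord_target]
        simp only [mul_one, smul_eq_mul]
        rfl
    _ = Real.pi * ∫ s in Set.Ioi (0 : ℝ), g s := by
        rw [integral_comp_sq_Ioi, setIntegral_one_eq_measureReal,
          Real.volume_real_Ioo_of_le (by linarith [Real.pi_pos])]
        ring

-- Both sides are integrals over the plane: of `g (x² + y²)` and of `g (x²) * g (y²)`.
lemma pi_mul_integral_Ioi_le_sq_integral_comp_sq {g : ℝ → ℝ} (hg₀ : ∀ s, 0 ≤ g s)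
    (hg : ∀ s t, 0 ≤ s → 0 ≤ t → g (s + t) ≤ g s * g t) (hint : Integrable fun x => g (x ^ 2)) :
    Real.pi * ∫ s in Set.Ioi (0 : ℝ), g s ≤ (∫ x, g (x ^ 2)) ^ 2 := by
  rw [← integral_comp_add_sq, sq, ← integral_prod_mul]
  exact integral_mono_of_nonneg (.of_forall fun _ => hg₀ _) (hint.mul_prod hint)
    (.of_forall fun p => hg _ _ (sq_nonneg p.1) (sq_nonneg p.2))

lemma one_sub_add_rpow_mul_exp_le {q s t : ℝ} (hq : 0 ≤ q) (hs : 0 ≤ s) (ht : 0 ≤ t)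
    (hst : s + t ≤ 1) (z : ℝ) :
    (1 - (s + t)) ^ q * Real.exp (z * (s + t)) ≤
      (1 - s) ^ q * Real.exp (z * s) * ((1 - t) ^ q * Real.exp (z * t)) := by
  rw [mul_mul_mul_comm, ← Real.mul_rpow (by linarith) (by linarith), ← Real.exp_add, ← mul_add]
  gcongr
  linarith [mul_nonneg hs ht]

lemma pi_mul_integral_one_sub_rpow_mul_exp_le {q : ℝ} (hq : 0 ≤ q) (z : ℝ) :
    Real.pi * ∫ u in Set.Ioo (0 : ℝ) 1, (1 - u) ^ q * Real.exp (z * u) ≤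
      (∫ u in Set.Ioo (0 : ℝ) 1, u ^ (-1 / 2 : ℝ) * (1 - u) ^ q * Real.exp (z * u)) ^ 2 := by
  have hcont : Continuous fun u : ℝ => (1 - u) ^ q * Real.exp (z * u) :=
    ((Real.continuous_rpow_const hq).comp (continuous_sub_left 1)).mul (by fun_prop)
  set g : ℝ → ℝ := (Set.Iio 1).indicator fun s => (1 - s) ^ q * Real.exp (z * s) with hg
  have hg_lt {s : ℝ} (hs : s < 1) : g s = (1 - s) ^ q * Real.exp (z * s) :=
    Set.indicator_of_mem (s := Set.Iio 1) hs _
  have hg₀ (s : ℝ) : 0 ≤ g s := Set.indicator_nonneg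
    (fun t ht => mul_nonneg (Real.rpow_nonneg (sub_nonneg.2 (le_of_lt ht)) q) (Real.exp_nonneg _)) s
  have hmul (s t : ℝ) (hs : 0 ≤ s) (ht : 0 ≤ t) : g (s + t) ≤ g s * g t := by
    by_cases hst : s + t < 1
    · rw [hg_lt hst, hg_lt (by linarith), hg_lt (by linarith)]
      exact one_sub_add_rpow_mul_exp_le hq hs ht hst.le z
    · rw [hg, Set.indicator_of_notMem (by simpa using hst)]
      exact mul_nonneg (hg₀ s) (hg₀ t)
  have hint : Integrable fun x => g (x ^ 2) := by
    have hpre : (fun x => g (x ^ 2)) = (Set.Ioo (-1) 1).indicator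
        fun x : ℝ => (1 - x ^ 2) ^ q * Real.exp (z * x ^ 2) := by
      ext x
      simp only [hg, Set.indicator_apply, Set.mem_Iio, sq_lt_one_iff_abs_lt_one, abs_lt,
        Set.mem_Ioo]
    rw [hpre, integrable_indicator_iff measurableSet_Ioo]
    exact (hcont.comp (continuous_pow 2)).integrableOn_Icc.mono_set Set.Ioo_subset_Icc_self
  have hset (f : ℝ → ℝ) : ∫ s in Set.Ioi (0 : ℝ), (Set.Iio 1).indicator f s =
      ∫ s in Set.Ioo 0 1, f s := by
    rw [setIntegral_indicator measurableSet_Iio, Set.Ioi_inter_Iio]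
  have h := pi_mul_integral_Ioi_le_sq_integral_comp_sq hg₀ hmul hint
  rw [integral_comp_sq, hset] at h
  simp_rw [hg, ← Set.indicator_mul_right (Set.Iio 1) fun s : ℝ => s ^ (-1 / 2 : ℝ)] at h
  rw [hset] at h
  simpa only [mul_assoc] using h

end DiskSquare

section Kummer

lemma integral_one_sub_rpow_mul_exp {b : ℝ} (hb : 0 < b) (z : ℝ) :
    ∫ u in Set.Ioo (0 : ℝ) 1, (1 - u) ^ (b - 1) * Real.exp (z * u) = kummerM 1 (b + 1) z / b := by
  have h := integral_rpow_mul_one_sub_rpow_mul_exp one_pos (lt_add_of_pos_left 1 hb) z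
  simp only [sub_self, Real.rpow_zero, one_mul, add_sub_cancel_right] at h
  rw [h, beta_one_left hb, inv_mul_eq_div]

lemma integral_rpow_neg_half_mul_one_sub_rpow_mul_exp {b : ℝ} (hb : 1 / 2 < b) (z : ℝ) :
    ∫ u in Set.Ioo (0 : ℝ) 1, u ^ (-1 / 2 : ℝ) * (1 - u) ^ (b - 3 / 2) * Real.exp (z * u) =
      √Real.pi * (Real.Gamma (b - 1 / 2) / Real.Gamma b * kummerM (1 / 2) b z) := by
  rw [show (-1 / 2 : ℝ) = 1 / 2 - 1 by norm_num, show b - 3 / 2 = b - 1 / 2 - 1 by ring,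
    integral_rpow_mul_one_sub_rpow_mul_exp one_half_pos hb, beta, Real.Gamma_one_half_eq,
    add_sub_cancel, mul_div_assoc, mul_assoc]

lemma kummerM_one_add_one_div_le {b : ℝ} (hb : 3 / 2 ≤ b) (z : ℝ) :
    kummerM 1 (b + 1) z / b ≤
      (Real.Gamma (b - 1 / 2) / Real.Gamma b * kummerM (1 / 2) b z) ^ 2 := by
  have hcont : Continuous fun u : ℝ => (1 - u) ^ (b - 3 / 2) * Real.exp (z * u) :=
    ((Real.continuous_rpow_const (by linarith)).comp (continuous_sub_left 1)).mul (by fun_prop)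
  have hle : ∫ u in Set.Ioo (0 : ℝ) 1, (1 - u) ^ (b - 1) * Real.exp (z * u) ≤
      ∫ u in Set.Ioo (0 : ℝ) 1, (1 - u) ^ (b - 3 / 2) * Real.exp (z * u) := by
    refine integral_mono_of_nonneg ?_
      (hcont.integrableOn_Icc.mono_set Set.Ioo_subset_Icc_self) ?_ <;>
      refine (ae_restrict_iff' measurableSet_Ioo).2 (.of_forall fun u hu => ?_) <;>
      have hu₁ : 0 < 1 - u := sub_pos.2 hu.2
    · exact mul_nonneg (Real.rpow_nonneg hu₁.le _) (Real.exp_nonneg _)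
    · have hrpow : (1 - u) ^ (b - 1) ≤ (1 - u) ^ (b - 3 / 2) :=
        Real.rpow_le_rpow_of_exponent_ge hu₁ (by linarith [hu.1]) (by linarith)
      exact mul_le_mul_of_nonneg_right hrpow (Real.exp_nonneg _)
  have hsq := pi_mul_integral_one_sub_rpow_mul_exp_le (by linarith : 0 ≤ b - 3 / 2) z
  rw [integral_rpow_neg_half_mul_one_sub_rpow_mul_exp (by linarith), mul_pow,
    Real.sq_sqrt Real.pi_pos.le] at hsq
  rw [← integral_one_sub_rpow_mul_exp (by linarith)]
  exact hle.trans (le_of_mul_le_mul_left hsq Real.pi_pos)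

end Kummer

section Moments

variable {m : ℕ}

lemma varrho_nonneg (m : ℕ) {x : ℝ} (hx : 0 ≤ x) : 0 ≤ varrho m x := by
  have := Real.Gamma_pos_of_pos (by positivity : (0 : ℝ) < (m + 1) / 2)
  have := Real.Gamma_pos_of_pos (by positivity : (0 : ℝ) < (m + 2) / 2)
  have hM : 0 < kummerM (1 / 2) ((m + 2) / 2) (-x ^ 2 / 2) :=
    kummerM_pos one_half_pos (by linarith [m.cast_nonneg (α := ℝ)]) _
  unfold varrho
  positivity

lemma fFun_eq (hm : m ≠ 0) (x : ℝ) :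
    fFun m x = gFun m x + (1 - m * gFun m x) - varrho m x ^ 2 := by
  have hm' : (m : ℝ) ≠ 0 := Nat.cast_ne_zero.2 hm
  rw [fFun, gFun]
  field_simp
  ring

lemma one_sub_mul_gFun (hm : m ≠ 0) (x : ℝ) :
    1 - m * gFun m x = x ^ 2 * kummerM 1 (m / 2 + 2) (-x ^ 2 / 2) / (m + 2) := by
  have hm' : (0 : ℝ) < m := Nat.cast_pos.2 (Nat.pos_of_ne_zero hm)
  rw [gFun, ← mul_assoc, mul_one_div_cancel hm'.ne', one_mul,
    one_sub_kummerM_one (by linarith), add_assoc, one_add_one_eq_two]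
  field_simp

lemma one_sub_mul_gFun_le_varrho_sq (hm : m ≠ 0) (x : ℝ) :
    1 - m * gFun m x ≤ varrho m x ^ 2 := by
  have hm' : (1 : ℝ) ≤ m := Nat.one_le_cast.2 (Nat.one_le_iff_ne_zero.2 hm)
  have h := kummerM_one_add_one_div_le (b := (m + 2) / 2) (by linarith) (-x ^ 2 / 2)
  calc 1 - m * gFun m x
    _ = x ^ 2 / 2 * (kummerM 1 ((m + 2) / 2 + 1) (-x ^ 2 / 2) / ((m + 2) / 2)) := by
        rw [one_sub_mul_gFun hm, show ((m : ℝ) + 2) / 2 + 1 = m / 2 + 2 by ring]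
        field_simp
    _ ≤ x ^ 2 / 2 * (Real.Gamma ((m + 2) / 2 - 1 / 2) / Real.Gamma ((m + 2) / 2) *
          kummerM (1 / 2) ((m + 2) / 2) (-x ^ 2 / 2)) ^ 2 := by gcongr
    _ = varrho m x ^ 2 := by
        rw [varrho, show ((m : ℝ) + 2) / 2 - 1 / 2 = (m + 1) / 2 by ring]
        simp only [mul_pow, div_pow, Real.sq_sqrt two_pos.le]
        ring

end Moments

section GammaIntegral

lemma integral_Ioi_eq_integral_Ioo (f : ℝ → ℝ) :
    ∫ t in Set.Ioi (0 : ℝ), f t =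
      ∫ u in Set.Ioo (0 : ℝ) 1, 1 / (2 * (1 - u) ^ 2) * f (u / (2 * (1 - u))) := by
  have hderiv : ∀ u ∈ Set.Ioo (0 : ℝ) 1,
      HasDerivWithinAt (fun u : ℝ => u / (2 * (1 - u))) (1 / (2 * (1 - u) ^ 2))
        (Set.Ioo 0 1) u := by
    intro u hu
    have hu₁ : 1 - u ≠ 0 := (sub_pos.2 hu.2).ne'
    have h := (hasDerivAt_id u).div (((hasDerivAt_id u).const_sub 1).const_mul 2)
      (mul_ne_zero two_ne_zero hu₁)
    refine (h.congr_deriv ?_).hasDerivWithinAt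
    simp only [id]
    field_simp
    ring
  have hinj : Set.InjOn (fun u : ℝ => u / (2 * (1 - u))) (Set.Ioo 0 1) := by
    intro u hu v hv huv
    have hu₁ : 1 - u ≠ 0 := (sub_pos.2 hu.2).ne'
    have hv₁ : 1 - v ≠ 0 := (sub_pos.2 hv.2).ne'
    field_simp at huv
    linarith
  have himg : (fun u : ℝ => u / (2 * (1 - u))) '' Set.Ioo 0 1 = Set.Ioi 0 := by
    refine Set.Subset.antisymm ?_ fun t (ht : 0 < t) => ?_
    · rintro _ ⟨u, hu, rfl⟩
      exact div_pos hu.1 (mul_pos two_pos (sub_pos.2 hu.2))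
    · refine ⟨2 * t / (1 + 2 * t), ⟨by positivity, ?_⟩, ?_⟩
      · rw [div_lt_one (by positivity)]
        linarith
      · field_simp
        ring
  rw [← himg, integral_image_eq_integral_abs_deriv_smul measurableSet_Ioo hderiv hinj]
  refine setIntegral_congr_fun measurableSet_Ioo fun u _ => ?_
  rw [abs_of_nonneg (by positivity), smul_eq_mul]

lemma integral_rpow_mul_one_add_rpow_neg_mul_exp {p q : ℝ} (hp : 0 < p) (hpq : p < q) (x : ℝ) :
    ∫ t in Set.Ioi (0 : ℝ),
        t ^ (p - 1) * ((1 + 2 * t) ^ (-q) * Real.exp (-(t * x ^ 2 / (1 + 2 * t)))) =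
      2 ^ (-p) * (beta p (q - p) * kummerM p q (-x ^ 2 / 2)) := by
  rw [← integral_rpow_mul_one_sub_rpow_mul_exp hp hpq, integral_Ioi_eq_integral_Ioo,
    ← integral_const_mul]
  refine setIntegral_congr_fun measurableSet_Ioo fun u hu => ?_
  have hu₁ : 0 < 1 - u := sub_pos.2 hu.2
  have hw : 1 + 2 * (u / (2 * (1 - u))) = (1 - u)⁻¹ := by
    field_simp
    ring
  have hexp : -(u / (2 * (1 - u)) * x ^ 2 / (1 - u)⁻¹) = -x ^ 2 / 2 * u := by
    field_simp
  have hpow : (u / (2 * (1 - u))) ^ (p - 1) =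
      u ^ (p - 1) * (2 * 2 ^ (-p)) * ((1 - u) * (1 - u) ^ (-p)) := by
    rw [Real.div_rpow hu.1.le (by positivity), Real.mul_rpow two_pos.le hu₁.le, div_eq_mul_inv,
      mul_inv, ← Real.rpow_neg two_pos.le, ← Real.rpow_neg hu₁.le, neg_sub, sub_eq_add_neg 1 p,
      Real.rpow_add two_pos, Real.rpow_add hu₁, Real.rpow_one, Real.rpow_one]
    ring
  have hone : (1 - u) ^ (q - p - 1) = (1 - u) ^ q * (1 - u) ^ (-p) * (1 - u)⁻¹ := by
    rw [sub_sub, Real.rpow_sub hu₁, Real.rpow_add hu₁, Real.rpow_one, Real.rpow_neg hu₁.le]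
    field_simp
  rw [hw, hexp, hpow, hone, Real.inv_rpow hu₁.le, Real.rpow_neg hu₁.le q, inv_inv]
  field_simp

lemma integrableOn_rpow_mul_one_add_rpow_neg_mul_exp {p q : ℝ} (hp : 0 < p) (hpq : p < q)
    (x : ℝ) :
    IntegrableOn (fun t => t ^ (p - 1) * ((1 + 2 * t) ^ (-q) *
      Real.exp (-(t * x ^ 2 / (1 + 2 * t))))) (Set.Ioi 0) := by
  refine Integrable.of_integral_ne_zero ?_
  rw [integral_rpow_mul_one_add_rpow_neg_mul_exp hp hpq]
  have hB := beta_pos hp (sub_pos.2 hpq)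
  have hM := kummerM_pos hp hpq (-x ^ 2 / 2)
  positivity

end GammaIntegral

section Laplace

variable {p : ℝ}

lemma integral_rpow_mul_mul_exp_neg (hp : 0 < p) {c s : ℝ} (hs : 0 ≤ s) (hcs : s = 0 → c = 0) :
    ∫ t in Set.Ioi (0 : ℝ), t ^ (p - 1) * (c * Real.exp (-(t * s))) =
      Real.Gamma p * (c / s ^ p) := by
  simp_rw [mul_left_comm _ c, mul_comm _ s]
  rw [integral_const_mul]
  rcases hs.eq_or_lt' with hs | hs
  · simp [hcs hs]
  · rw [Real.integral_rpow_mul_exp_neg_mul_Ioi hp hs, one_div, Real.inv_rpow hs.le]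
    ring

lemma integrableOn_rpow_mul_mul_exp_neg (hp : 0 < p) {c s : ℝ} (hs : 0 ≤ s)
    (hcs : s = 0 → c = 0) :
    IntegrableOn (fun t => t ^ (p - 1) * (c * Real.exp (-(t * s)))) (Set.Ioi 0) := by
  rcases eq_or_ne c 0 with hc | hc
  · simp [hc]
  · refine Integrable.of_integral_ne_zero ?_
    rw [integral_rpow_mul_mul_exp_neg hp hs hcs]
    have hs' : 0 < s := hs.lt_of_ne' (mt hcs hc)
    have := Real.Gamma_pos_of_pos hp
    positivity

section Fubini

variable {α : Type*} [MeasurableSpace α] (γ : Measure α) [IsFiniteMeasure γ] {f s : α → ℝ} {C : ℝ}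

lemma integrable_prod_rpow_mul_mul_exp_neg (hf : Measurable f) (hs : Measurable s)
    (hs₀ : ∀ y, 0 ≤ s y) (hp : 0 < p) (hfs : ∀ y, |f y| ≤ C * s y ^ p) :
    Integrable (fun yt : α × ℝ => yt.2 ^ (p - 1) * (f yt.1 * Real.exp (-(yt.2 * s yt.1))))
      (γ.prod (volume.restrict (Set.Ioi 0))) := by
  have hf₀ (y : α) (hy : s y = 0) : f y = 0 := by
    simpa [hy, Real.zero_rpow hp.ne'] using hfs y
  have hnorm (y : α) : ∫ t in Set.Ioi (0 : ℝ), ‖t ^ (p - 1) * (f y * Real.exp (-(t * s y)))‖ =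
      Real.Gamma p * (|f y| / s y ^ p) := by
    rw [← integral_rpow_mul_mul_exp_neg hp (hs₀ y) fun hy => abs_eq_zero.2 (hf₀ y hy)]
    refine setIntegral_congr_fun measurableSet_Ioi fun t (ht : 0 < t) => ?_
    simp only [norm_mul, Real.norm_eq_abs, Real.abs_exp, Real.abs_rpow_of_nonneg ht.le,
      abs_of_pos ht]
  refine (integrable_prod_iff (Measurable.aestronglyMeasurable (by fun_prop))).2
    ⟨.of_forall fun y => integrableOn_rpow_mul_mul_exp_neg hp (hs₀ y) (hf₀ y), ?_⟩
  simp only [hnorm]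
  refine (Integrable.of_bound (C := |C|)
    (hf.abs.div (hs.pow_const p)).aestronglyMeasurable (.of_forall fun y => ?_)).const_mul _
  have hsp := Real.rpow_nonneg (hs₀ y) p
  rw [Pi.div_apply, Real.norm_of_nonneg (div_nonneg (abs_nonneg _) hsp)]
  exact div_le_of_le_mul₀ hsp (abs_nonneg C)
    ((hfs y).trans (mul_le_mul_of_nonneg_right (le_abs_self C) hsp))

lemma integral_div_rpow_eq (hf : Measurable f) (hs : Measurable s) (hs₀ : ∀ y, 0 ≤ s y)
    (hp : 0 < p) (hfs : ∀ y, |f y| ≤ C * s y ^ p) :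
    ∫ y, f y / s y ^ p ∂γ = (Real.Gamma p)⁻¹ *
      ∫ t in Set.Ioi (0 : ℝ), t ^ (p - 1) * ∫ y, f y * Real.exp (-(t * s y)) ∂γ := by
  have hlaplace (y : α) : ∫ t in Set.Ioi (0 : ℝ), t ^ (p - 1) * (f y * Real.exp (-(t * s y))) =
      Real.Gamma p * (f y / s y ^ p) :=
    integral_rpow_mul_mul_exp_neg hp (hs₀ y) fun hy => by
      simpa [hy, Real.zero_rpow hp.ne'] using hfs y
  calc ∫ y, f y / s y ^ p ∂γ
    _ = (Real.Gamma p)⁻¹ *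
          ∫ y, (∫ t in Set.Ioi (0 : ℝ), t ^ (p - 1) * (f y * Real.exp (-(t * s y)))) ∂γ := by
        simp_rw [hlaplace]
        rw [integral_const_mul, inv_mul_cancel_left₀ (Real.Gamma_pos_of_pos hp).ne']
    _ = _ := by
        rw [integral_integral_swap (integrable_prod_rpow_mul_mul_exp_neg γ hf hs hs₀ hp hfs)]
        simp_rw [integral_const_mul]

end Fubini

end Laplace

lemma inner_eq_norm_mul_inner_div_norm {E : Type*} [NormedAddCommGroup E] [InnerProductSpace ℝ E]
    (a ν : E) : ⟪a, ν⟫ = ‖ν‖ * (⟪a, ν⟫ / ‖ν‖) :=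
  (mul_div_cancel_of_imp' fun h => by rw [norm_eq_zero.1 h, inner_zero_right]).symm

section Gaussian

variable {E : Type*} [NormedAddCommGroup E] [InnerProductSpace ℝ E] [FiniteDimensional ℝ E]
  [MeasurableSpace E] [BorelSpace E]

open Module

lemma integrable_exp_neg_sq_norm_div_two :
    Integrable fun x : E => Real.exp (-(‖x‖ ^ 2 / 2)) := by
  refine (GaussianFourier.integrable_cexp_neg_mul_sq_norm_add (V := E) (b := 1 / 2)
    (by norm_num) 0 0).norm.congr (.of_forall fun x => ?_)
  simp only [Complex.norm_exp]
  congr 1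
  norm_num [← Complex.ofReal_pow, div_eq_inv_mul]

lemma stdGaussian_eq_withDensity :
    stdGaussian E = (volume : Measure E).withDensity fun x =>
      ENNReal.ofReal ((2 * Real.pi) ^ (-(finrank ℝ E / 2 : ℝ)) * Real.exp (-(‖x‖ ^ 2 / 2))) := by
  set φ : E → ℝ := fun x =>
    (2 * Real.pi) ^ (-(finrank ℝ E / 2 : ℝ)) * Real.exp (-(‖x‖ ^ 2 / 2)) with hφ
  have hφ₀ (x : E) : 0 ≤ φ x := by positivity
  have hφint : Integrable φ := integrable_exp_neg_sq_norm_div_two.const_mul _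
  have := isFiniteMeasure_withDensity_ofReal hφint.2
  refine Measure.ext_of_charFun (funext fun t => ?_)
  rw [charFun_stdGaussian, charFun_apply, integral_withDensity_eq_integral_toReal_smul
    (by fun_prop) (by simp)]
  have hint (x : E) : (ENNReal.ofReal (φ x)).toReal • Complex.exp (⟪x, t⟫ * Complex.I) =
      ((2 * Real.pi) ^ (-(finrank ℝ E / 2 : ℝ)) : ℝ) *
        Complex.exp (-(1 / 2) * ‖x‖ ^ 2 + Complex.I * ⟪t, x⟫) := by
    rw [ENNReal.toReal_ofReal (hφ₀ x), hφ, Complex.real_smul, Complex.ofReal_mul,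
      Complex.ofReal_exp, mul_assoc, ← Complex.exp_add, real_inner_comm x t]
    push_cast
    ring_nf
  have hpi : ((Real.pi / (1 / 2) : ℂ)) ^ (finrank ℝ E / 2 : ℂ) =
      ((2 * Real.pi) ^ (finrank ℝ E / 2 : ℝ) : ℝ) := by
    rw [Complex.ofReal_cpow (by positivity)]
    push_cast
    congr 1
    ring
  rw [integral_congr_ae (.of_forall hint), integral_const_mul,
    GaussianFourier.integral_cexp_neg_mul_sq_norm_add (by norm_num), Complex.I_sq, hpi,
    ← mul_assoc, ← Complex.ofReal_mul, ← Real.rpow_add (by positivity), neg_add_cancel,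
    Real.rpow_zero, Complex.ofReal_one, one_mul]
  congr 1
  ring

lemma integral_stdGaussian (f : E → ℝ) :
    ∫ x, f x ∂stdGaussian E =
      (2 * Real.pi) ^ (-(finrank ℝ E / 2 : ℝ)) * ∫ x, Real.exp (-(‖x‖ ^ 2 / 2)) * f x := by
  rw [stdGaussian_eq_withDensity, integral_withDensity_eq_integral_toReal_smul
    (by fun_prop) (by simp), ← integral_const_mul]
  congr with x
  rw [ENNReal.toReal_ofReal (by positivity), smul_eq_mul, mul_assoc]

lemma integral_stdGaussian_mul_exp_neg_sq_norm (f : E → ℝ) (ν : E) {t w : ℝ} (hw : 0 < w)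
    (hwt : w * (1 + 2 * t) = 1) :
    ∫ x, f (ν + x) * Real.exp (-(t * ‖ν + x‖ ^ 2)) ∂stdGaussian E =
      w ^ (finrank ℝ E / 2 : ℝ) * Real.exp (-(t * (w * ‖ν‖ ^ 2))) *
        ∫ x, f (w • ν + √w • x) ∂stdGaussian E := by
  have hsq (y : E) : ‖y - ν‖ ^ 2 / 2 + t * ‖y‖ ^ 2 =
      t * (w * ‖ν‖ ^ 2) + ‖y - w • ν‖ ^ 2 / w / 2 := by
    rw [norm_sub_sq_real, norm_sub_sq_real, norm_smul, real_inner_smul_right, mul_pow,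
      Real.norm_of_nonneg hw.le]
    field_simp
    linear_combination (‖y‖ ^ 2 - w * ‖ν‖ ^ 2) * hwt
  set h : E → ℝ := fun y => Real.exp (-(‖y‖ ^ 2 / w / 2)) * f (w • ν + y) with hh
  have hscale : w ^ (finrank ℝ E / 2 : ℝ) * ∫ x, h (√w • x) = ∫ y, h y := by
    have hpow : w ^ (finrank ℝ E / 2 : ℝ) = √w ^ finrank ℝ E := by
      rw [Real.sqrt_eq_rpow, ← Real.rpow_mul_natCast hw.le, one_div_mul_eq_div]
    have hpos : 0 < √w ^ finrank ℝ E := by positivity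
    rw [Measure.integral_comp_smul, hpow, abs_of_pos (inv_pos.2 hpos), smul_eq_mul,
      mul_inv_cancel_left₀ hpos.ne']
  have hnorm (x : E) : Real.exp (-(‖x‖ ^ 2 / 2)) * f (w • ν + √w • x) = h (√w • x) := by
    rw [hh]
    simp only [norm_smul, mul_pow]
    rw [Real.norm_of_nonneg (Real.sqrt_nonneg w), Real.sq_sqrt hw.le, mul_div_cancel_left₀ _ hw.ne']
  have hexp (y : E) : Real.exp (-(‖y - ν‖ ^ 2 / 2)) * (f y * Real.exp (-(t * ‖y‖ ^ 2))) =
      Real.exp (-(t * (w * ‖ν‖ ^ 2))) * h (y - w • ν) := by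
    rw [hh, mul_left_comm, ← Real.exp_add, ← neg_add, hsq, neg_add, Real.exp_add]
    simp only [add_sub_cancel]
    ring
  rw [integral_stdGaussian, integral_stdGaussian]
  simp_rw [hnorm]
  rw [mul_left_comm, mul_right_comm, hscale, mul_comm _ (Real.exp _),
    ← integral_sub_right_eq_self h (w • ν), ← integral_sub_right_eq_self _ ν]
  simp only [add_sub_cancel, hexp, integral_const_mul]

lemma integral_inner_add_smul_stdGaussian (a b : E) (c : ℝ) :
    ∫ x, ⟪a, b + c • x⟫ ∂stdGaussian E = ⟪a, b⟫ := by
  have hL : Integrable (fun x => ⟪a, x⟫) (stdGaussian E) :=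
    (IsGaussian.memLp_dual (stdGaussian E) (innerSL ℝ a) 1 ENNReal.one_ne_top).integrable le_rfl
  have hL₀ : ∫ x, ⟪a, x⟫ ∂stdGaussian E = 0 := integral_strongDual_stdGaussian (innerSL ℝ a)
  simp_rw [inner_add_right, real_inner_smul_right]
  rw [integral_add (integrable_const _) (hL.const_mul c), integral_const_mul, hL₀]
  simp

lemma integral_inner_add_smul_sq_stdGaussian (a b : E) (c : ℝ) :
    ∫ x, ⟪a, b + c • x⟫ ^ 2 ∂stdGaussian E = ⟪a, b⟫ ^ 2 + c ^ 2 * ‖a‖ ^ 2 := by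
  have hL : MemLp (fun x => ⟪a, x⟫) 2 (stdGaussian E) :=
    IsGaussian.memLp_dual (stdGaussian E) (innerSL ℝ a) 2 ENNReal.ofNat_ne_top
  have hmem : MemLp (fun x => ⟪a, b + c • x⟫) 2 (stdGaussian E) := by
    simp_rw [inner_add_right, real_inner_smul_right]
    exact (memLp_const ⟪a, b⟫).add (g := fun x => c * ⟪a, x⟫) (hL.const_mul c)
  have hvar : Var[fun x => ⟪a, b + c • x⟫; stdGaussian E] = c ^ 2 * ‖a‖ ^ 2 := by
    have h := variance_dual_stdGaussian (innerSL ℝ a)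
    rw [innerSL_apply_norm] at h
    simp_rw [inner_add_right, real_inner_smul_right]
    rw [variance_const_add (by fun_prop), variance_const_mul]
    exact congrArg _ h
  have h := variance_eq_sub hmem
  rw [hvar, integral_inner_add_smul_stdGaussian] at h
  simp only [Pi.pow_apply] at h
  linarith

lemma integral_inner_mul_exp_neg_stdGaussian (a ν : E) {t : ℝ} (ht : 0 ≤ t) :
    ∫ x, ⟪a, ν + x⟫ * Real.exp (-(t * ‖ν + x‖ ^ 2)) ∂stdGaussian E =
      ⟪a, ν⟫ * ((1 + 2 * t) ^ (-(finrank ℝ E / 2 + 1 : ℝ)) *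
        Real.exp (-(t * ‖ν‖ ^ 2 / (1 + 2 * t)))) := by
  have hw : 0 < 1 + 2 * t := by linarith
  rw [integral_stdGaussian_mul_exp_neg_sq_norm (fun y => ⟪a, y⟫) ν (inv_pos.2 hw)
    (inv_mul_cancel₀ hw.ne'), integral_inner_add_smul_stdGaussian, real_inner_smul_right, neg_add,
    Real.rpow_add hw, Real.rpow_neg_one, Real.inv_rpow hw.le, Real.rpow_neg hw.le,
    mul_div_assoc, div_eq_inv_mul (‖ν‖ ^ 2)]
  ring

lemma integral_inner_sq_mul_exp_neg_stdGaussian (a ν : E) {t : ℝ} (ht : 0 ≤ t) :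
    ∫ x, ⟪a, ν + x⟫ ^ 2 * Real.exp (-(t * ‖ν + x‖ ^ 2)) ∂stdGaussian E =
      ‖a‖ ^ 2 * ((1 + 2 * t) ^ (-(finrank ℝ E / 2 + 1 : ℝ)) *
          Real.exp (-(t * ‖ν‖ ^ 2 / (1 + 2 * t)))) +
        ⟪a, ν⟫ ^ 2 * ((1 + 2 * t) ^ (-(finrank ℝ E / 2 + 2 : ℝ)) *
          Real.exp (-(t * ‖ν‖ ^ 2 / (1 + 2 * t)))) := by
  have hw : 0 < 1 + 2 * t := by linarith
  rw [integral_stdGaussian_mul_exp_neg_sq_norm (fun y => ⟪a, y⟫ ^ 2) ν (inv_pos.2 hw)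
    (inv_mul_cancel₀ hw.ne'), integral_inner_add_smul_sq_stdGaussian, real_inner_smul_right,
    neg_add, neg_add, Real.rpow_add hw, Real.rpow_add hw, Real.rpow_neg_one,
    Real.rpow_neg hw.le 2, Real.rpow_two, ← inv_pow, Real.inv_rpow hw.le, Real.rpow_neg hw.le,
    Real.sq_sqrt (inv_nonneg.2 hw.le), mul_div_assoc,
    div_eq_inv_mul (‖ν‖ ^ 2)]
  ring

lemma integral_inner_div_norm_stdGaussian (a ν : E) :
    ∫ x, ⟪a, ν + x⟫ / ‖ν + x‖ ∂stdGaussian E = varrho (finrank ℝ E) ‖ν‖ * (⟪a, ν⟫ / ‖ν‖) := by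
  have hsqrt (x : E) : (‖ν + x‖ ^ 2) ^ (1 / 2 : ℝ) = ‖ν + x‖ := by
    rw [← Real.sqrt_eq_rpow, Real.sqrt_sq (norm_nonneg _)]
  have hlaplace := integral_div_rpow_eq (stdGaussian E) (f := fun x => ⟪a, ν + x⟫)
    (s := fun x => ‖ν + x‖ ^ 2) (C := ‖a‖) (by fun_prop) (by fun_prop) (fun _ => sq_nonneg _)
    one_half_pos fun x => by rw [hsqrt]; exact abs_real_inner_le_norm _ _
  have hd : (1 / 2 : ℝ) < finrank ℝ E / 2 + 1 := by
    linarith [(finrank ℝ E).cast_nonneg (α := ℝ)]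
  have hinner : ∫ t in Set.Ioi (0 : ℝ), t ^ (1 / 2 - 1 : ℝ) *
      ∫ x, ⟪a, ν + x⟫ * Real.exp (-(t * ‖ν + x‖ ^ 2)) ∂stdGaussian E =
      ⟪a, ν⟫ * ∫ t in Set.Ioi (0 : ℝ), t ^ (1 / 2 - 1 : ℝ) *
        ((1 + 2 * t) ^ (-(finrank ℝ E / 2 + 1 : ℝ)) *
          Real.exp (-(t * ‖ν‖ ^ 2 / (1 + 2 * t)))) := by
    rw [← integral_const_mul]
    refine setIntegral_congr_fun measurableSet_Ioi fun t (ht : 0 < t) => ?_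
    rw [integral_inner_mul_exp_neg_stdGaussian a ν ht.le, mul_left_comm]
  simp_rw [hsqrt] at hlaplace
  rw [hlaplace, hinner, integral_rpow_mul_one_add_rpow_neg_mul_exp one_half_pos hd, varrho, beta]
  nth_rw 1 [inner_eq_norm_mul_inner_div_norm a ν]
  have hΓ : Real.Gamma (1 / 2) ≠ 0 := (Real.Gamma_pos_of_pos one_half_pos).ne'
  rw [Real.rpow_neg zero_le_two, ← Real.sqrt_eq_rpow, add_sub_cancel,
    show (finrank ℝ E / 2 + 1 - 1 / 2 : ℝ) = (finrank ℝ E + 1) / 2 by ring,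
    show (finrank ℝ E / 2 + 1 : ℝ) = (finrank ℝ E + 2) / 2 by ring]
  field_simp

lemma integral_inner_sq_div_norm_sq_stdGaussian (hd : finrank ℝ E ≠ 0) (a ν : E) :
    ∫ x, ⟪a, ν + x⟫ ^ 2 / ‖ν + x‖ ^ 2 ∂stdGaussian E =
      ‖a‖ ^ 2 * gFun (finrank ℝ E) ‖ν‖ +
        (1 - finrank ℝ E * gFun (finrank ℝ E) ‖ν‖) * (⟪a, ν⟫ / ‖ν‖) ^ 2 := by
  have hd' : (0 : ℝ) < finrank ℝ E := Nat.cast_pos.2 (Nat.pos_of_ne_zero hd)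
  have hbound (x : E) : |⟪a, ν + x⟫ ^ 2| ≤ ‖a‖ ^ 2 * (‖ν + x‖ ^ 2) ^ (1 : ℝ) := by
    rw [Real.rpow_one, ← mul_pow, abs_pow]
    exact pow_le_pow_left₀ (abs_nonneg _) (abs_real_inner_le_norm _ _) 2
  have hlaplace := integral_div_rpow_eq (stdGaussian E) (f := fun x => ⟪a, ν + x⟫ ^ 2)
    (s := fun x => ‖ν + x‖ ^ 2) (by fun_prop) (by fun_prop) (fun _ => sq_nonneg _)
    one_pos hbound
  have hq₁ : (1 : ℝ) < finrank ℝ E / 2 + 1 := by linarith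
  have hq₂ : (1 : ℝ) < finrank ℝ E / 2 + 2 := by linarith
  have hinner : ∫ t in Set.Ioi (0 : ℝ), t ^ (1 - 1 : ℝ) *
      ∫ x, ⟪a, ν + x⟫ ^ 2 * Real.exp (-(t * ‖ν + x‖ ^ 2)) ∂stdGaussian E =
      ‖a‖ ^ 2 * (∫ t in Set.Ioi (0 : ℝ), t ^ (1 - 1 : ℝ) *
        ((1 + 2 * t) ^ (-(finrank ℝ E / 2 + 1 : ℝ)) *
          Real.exp (-(t * ‖ν‖ ^ 2 / (1 + 2 * t))))) +
      ⟪a, ν⟫ ^ 2 * ∫ t in Set.Ioi (0 : ℝ), t ^ (1 - 1 : ℝ) *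
        ((1 + 2 * t) ^ (-(finrank ℝ E / 2 + 2 : ℝ)) *
          Real.exp (-(t * ‖ν‖ ^ 2 / (1 + 2 * t)))) := by
    rw [← integral_const_mul, ← integral_const_mul, ← integral_add
      ((integrableOn_rpow_mul_one_add_rpow_neg_mul_exp one_pos hq₁ ‖ν‖).const_mul _)
      ((integrableOn_rpow_mul_one_add_rpow_neg_mul_exp one_pos hq₂ ‖ν‖).const_mul _)]
    refine setIntegral_congr_fun measurableSet_Ioi fun t (ht : 0 < t) => ?_
    rw [integral_inner_sq_mul_exp_neg_stdGaussian a ν ht.le]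
    ring
  simp_rw [Real.rpow_one] at hlaplace
  rw [hlaplace, hinner, integral_rpow_mul_one_add_rpow_neg_mul_exp one_pos hq₁,
    integral_rpow_mul_one_add_rpow_neg_mul_exp one_pos hq₂, one_sub_mul_gFun hd, gFun,
    beta_one_left (by linarith), beta_one_left (by linarith), Real.Gamma_one, Real.rpow_neg_one]
  nth_rw 1 [inner_eq_norm_mul_inner_div_norm a ν]
  rw [add_sub_cancel_right, show (finrank ℝ E / 2 + 2 - 1 : ℝ) = (finrank ℝ E + 2) / 2 by ring]
  generalize kummerM 1 _ _ = M₁, kummerM 1 _ _ = M₂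
  field_simp

lemma variance_inner_div_norm_stdGaussian (hd : finrank ℝ E ≠ 0) (a ν : E) :
    Var[fun x => ⟪a, ν + x⟫ / ‖ν + x‖; stdGaussian E] =
      ‖a‖ ^ 2 * gFun (finrank ℝ E) ‖ν‖ +
        (1 - finrank ℝ E * gFun (finrank ℝ E) ‖ν‖ - varrho (finrank ℝ E) ‖ν‖ ^ 2) *
          (⟪a, ν⟫ / ‖ν‖) ^ 2 := by
  have hbound (x : E) : ‖⟪a, ν + x⟫ / ‖ν + x‖‖ ≤ ‖a‖ := by
    rw [norm_div, norm_norm]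
    exact div_le_of_le_mul₀ (norm_nonneg _) (norm_nonneg _) (norm_inner_le_norm _ _)
  have hmem : MemLp (fun x => ⟪a, ν + x⟫ / ‖ν + x‖) 2 (stdGaussian E) :=
    .of_bound (Measurable.aestronglyMeasurable (by fun_prop)) ‖a‖ (.of_forall hbound)
  rw [variance_eq_sub hmem, integral_inner_div_norm_stdGaussian]
  simp_rw [Pi.pow_apply, div_pow]
  rw [integral_inner_sq_div_norm_sq_stdGaussian hd]
  ring

lemma integral_sub_variance_inner_div_norm_stdGaussian_le (hd : finrank ℝ E ≠ 0) {a : E}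
    (ha : ‖a‖ = 1) (ν : E) {lam : ℝ} (hlam : 0 ≤ lam) :
    ∫ x, ⟪a, ν + x⟫ / ‖ν + x‖ ∂stdGaussian E -
        lam * Var[fun x => ⟪a, ν + x⟫ / ‖ν + x‖; stdGaussian E] ≤
      varrho (finrank ℝ E) ‖ν‖ - lam * fFun (finrank ℝ E) ‖ν‖ := by
  have hc : |⟪a, ν⟫ / ‖ν‖| ≤ 1 := by
    rw [abs_div, abs_norm]
    exact div_le_one_of_le₀ ((abs_real_inner_le_norm a ν).trans_eq (by rw [ha, one_mul]))
      (norm_nonneg ν)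
  rw [integral_inner_div_norm_stdGaussian, variance_inner_div_norm_stdGaussian hd, ha, fFun_eq hd]
  have hmean := mul_le_of_le_one_right (varrho_nonneg (finrank ℝ E) (norm_nonneg ν))
    (le_of_abs_le hc)
  have hgap := mul_nonneg hlam (mul_nonneg (sub_nonneg.2 (one_sub_mul_gFun_le_varrho_sq hd ‖ν‖))
    (sub_nonneg.2 ((sq_le_one_iff_abs_le_one _).2 hc)))
  linarith

lemma integral_sub_variance_inner_div_norm_stdGaussian_eq {ν : E} (hν : ν ≠ 0) (lam : ℝ) :
    ∫ x, ⟪‖ν‖⁻¹ • ν, ν + x⟫ / ‖ν + x‖ ∂stdGaussian E -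
        lam * Var[fun x => ⟪‖ν‖⁻¹ • ν, ν + x⟫ / ‖ν + x‖; stdGaussian E] =
      varrho (finrank ℝ E) ‖ν‖ - lam * fFun (finrank ℝ E) ‖ν‖ := by
  have hd : finrank ℝ E ≠ 0 := (finrank_pos_iff_exists_ne_zero.2 ⟨ν, hν⟩).ne'
  have hc : ⟪‖ν‖⁻¹ • ν, ν⟫ / ‖ν‖ = 1 := by
    rw [real_inner_smul_left, real_inner_self_eq_norm_sq]
    field_simp
  have ha : ‖‖ν‖⁻¹ • ν‖ = 1 := norm_smul_inv_norm (𝕜 := ℝ) hν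
  rw [integral_inner_div_norm_stdGaussian, variance_inner_div_norm_stdGaussian hd, hc, ha,
    fFun_eq hd]
  ring

end Gaussian

lemma map_stdGaussian_of_comp_adjoint_eq_id {E F : Type*}
    [NormedAddCommGroup E] [InnerProductSpace ℝ E] [FiniteDimensional ℝ E]
    [MeasurableSpace E] [BorelSpace E]
    [NormedAddCommGroup F] [InnerProductSpace ℝ F] [FiniteDimensional ℝ F]
    [MeasurableSpace F] [BorelSpace F]
    (L : E →L[ℝ] F) (hL : L ∘L L.adjoint = .id ℝ F) :
    (stdGaussian E).map L = stdGaussian F := by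
  refine Measure.ext_of_charFun (funext fun t => ?_)
  have hnorm : ‖L.adjoint t‖ = ‖t‖ := by
    rw [← sq_eq_sq₀ (norm_nonneg _) (norm_nonneg _), ← real_inner_self_eq_norm_sq,
      L.adjoint_inner_right, ← L.comp_apply, hL, ContinuousLinearMap.id_apply,
      real_inner_self_eq_norm_sq]
  rw [charFun_stdGaussian, ← hnorm, ← charFun_stdGaussian, charFun_apply, charFun_apply,
    integral_map (by fun_prop) (Measurable.aestronglyMeasurable (by fun_prop))]
  simp_rw [L.adjoint_inner_right]

section Centering

variable {n : ℕ} {τ : ℝ}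

/-- The hyperplane `⟨𝟙⟩^⊥` of `ℝⁿ`, as an inner product space of its own, so that it carries a
standard Gaussian measure. -/
def centeredSubspace (n : ℕ) : Submodule ℝ (EuclideanSpace ℝ (Fin n)) :=
  (ℝ ∙ WithLp.toLp 2 1)ᗮ

lemma toLp_mem_centeredSubspace {x : Fin n → ℝ} :
    WithLp.toLp 2 x ∈ centeredSubspace n ↔ ∑ i, x i = 0 := by
  rw [centeredSubspace, Submodule.mem_orthogonal_singleton_iff_inner_right,
    EuclideanSpace.inner_toLp_toLp, star_one, dotProduct_one]

lemma toEuclideanCLM_centerMat :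
    toEuclideanCLM (𝕜 := ℝ) (centerMat n) = (centeredSubspace n).starProjection := by
  ext x i
  simp only [centeredSubspace, centerMat, Submodule.starProjection_orthogonal_val,
    Submodule.starProjection_singleton, map_sub, map_one, map_smul]
  have hsum : (of fun _ _ => (1 : ℝ)) *ᵥ x.ofLp = fun _ : Fin n => ∑ j, x j := by
    ext; simp [mulVec, dotProduct]
  have hinner : ⟪WithLp.toLp 2 1, x⟫ = ∑ j, x j := by simp [PiLp.inner_apply]
  have hnorm : ‖(WithLp.toLp 2 1 : EuclideanSpace ℝ (Fin n))‖ ^ 2 = n := by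
    simp [EuclideanSpace.norm_sq_eq]
  rw [hinner, hnorm]
  simp [hsum, div_eq_inv_mul]

lemma toLp_centerMat_mulVec (z : Fin n → ℝ) :
    WithLp.toLp 2 (centerMat n *ᵥ z) =
      (centeredSubspace n).orthogonalProjectionOnto (WithLp.toLp 2 z) := by
  rw [← toEuclideanCLM_toLp, toEuclideanCLM_centerMat, Submodule.starProjection_apply]

lemma finrank_centeredSubspace (hn : n ≠ 0) :
    Module.finrank ℝ (centeredSubspace n) = n - 1 := by
  have hone : (WithLp.toLp 2 1 : EuclideanSpace ℝ (Fin n)) ≠ 0 := by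
    have : NeZero n := ⟨hn⟩
    exact fun h => one_ne_zero (congrFun ((WithLp.toLp_eq_zero 2).1 h) 0)
  have h := Submodule.finrank_add_finrank_orthogonal
    (ℝ ∙ (WithLp.toLp 2 1 : EuclideanSpace ℝ (Fin n)))
  rw [finrank_span_singleton hone, finrank_euclideanSpace_fin] at h
  exact Nat.eq_sub_of_add_eq' h

lemma map_smul_orthogonalProjectionOnto_stdGaussian (hτ : τ ≠ 0)
    {A : Matrix (Fin n) (Fin n) ℝ}
    (hA : centerMat n * (A * Aᵀ) * centerMat n = τ ^ 2 • centerMat n) :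
    (stdGaussian (EuclideanSpace ℝ (Fin n))).map
      (τ⁻¹ • ((centeredSubspace n).orthogonalProjectionOnto ∘L toEuclideanCLM (𝕜 := ℝ) A)) =
      stdGaussian (centeredSubspace n) := by
  refine map_stdGaussian_of_comp_adjoint_eq_id _ ?_
  have hadj : (toEuclideanCLM (𝕜 := ℝ) A).adjoint = toEuclideanCLM (𝕜 := ℝ) Aᵀ := by
    rw [← conjTranspose_eq_transpose_of_trivial, ← star_eq_conjTranspose, map_star,
      ContinuousLinearMap.star_eq_adjoint]
  have hA' := congrArg (toEuclideanCLM (𝕜 := ℝ)) hA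
  simp only [map_mul, map_smul, toEuclideanCLM_centerMat] at hA'
  ext1 y
  refine Subtype.ext ?_
  have hy := DFunLike.congr_fun hA' (y : EuclideanSpace ℝ (Fin n))
  simp only [mul_apply_eq_comp, _root_.smul_apply,
    Submodule.starProjection_mem_subspace_eq_self] at hy
  simp only [map_smulₛₗ, ContinuousLinearMap.adjoint_comp, hadj,
    Submodule.adjoint_orthogonalProjectionOnto, ContinuousLinearMap.comp_apply, _root_.smul_apply,
    Submodule.subtypeL_apply, smul_smul, ContinuousLinearMap.id_apply, Submodule.coe_smul,
    Submodule.coe_orthogonalProjectionOnto_apply, hy, RingHom.id_apply, conj_trivial]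
  rw [← sq, inv_pow, inv_mul_cancel₀ (pow_ne_zero 2 hτ), one_smul]

/-- The projection `Pz` in units of `τ`, as a point of the centered hyperplane: it takes a Gaussian
vector whose projected covariance is `τ² P` to a translate of a standard one. -/
def scaledCenter (τ : ℝ) (z : Fin n → ℝ) : centeredSubspace n :=
  τ⁻¹ • (centeredSubspace n).orthogonalProjectionOnto (WithLp.toLp 2 z)

lemma identDistrib_scaledCenter {Ω : Type*} [MeasurableSpace Ω] {P : Measure Ω}
    {Z : Ω → Fin n → ℝ} {μ : Fin n → ℝ} {S : Matrix (Fin n) (Fin n) ℝ} (hτ : τ ≠ 0)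
    (hZ : IsGaussianVec P Z μ S) (hS : centerMat n * S * centerMat n = τ ^ 2 • centerMat n) :
    IdentDistrib (fun ω => scaledCenter τ (Z ω)) (fun x => scaledCenter τ μ + x) P
      (stdGaussian (centeredSubspace n)) := by
  obtain ⟨A, rfl, hmap⟩ := hZ
  have hproj : Measurable (scaledCenter (n := n) τ) := by
    unfold scaledCenter
    fun_prop
  have hlaw : Measurable fun x : Fin n → ℝ => μ + A *ᵥ x := by fun_prop
  have hprob : IsProbabilityMeasure (stdGaussianPi n) := by
    unfold stdGaussianPi
    infer_instance
  have hZ : AEMeasurable Z P := by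
    have := Measure.isProbabilityMeasure_map (μ := stdGaussianPi n) hlaw.aemeasurable
    exact aemeasurable_of_map_neZero (hmap ▸ inferInstance)
  refine ⟨hproj.comp_aemeasurable hZ, by fun_prop, ?_⟩
  set L := τ⁻¹ • ((centeredSubspace n).orthogonalProjectionOnto ∘L toEuclideanCLM (𝕜 := ℝ) A)
    with hL
  have hcomp : scaledCenter τ ∘ (fun x => μ + A *ᵥ x) =
      (fun y => scaledCenter τ μ + y) ∘ L ∘ WithLp.toLp 2 := by
    ext1 x
    simp [scaledCenter, hL, WithLp.toLp_add]
  calc P.map (fun ω => scaledCenter τ (Z ω))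
    _ = (P.map Z).map (scaledCenter τ) := (AEMeasurable.map_map_of_aemeasurable
        hproj.aemeasurable hZ).symm
    _ = (stdGaussianPi n).map (scaledCenter τ ∘ fun x => μ + A *ᵥ x) := by
        rw [hmap, Measure.map_map hproj hlaw]
    _ = (stdGaussian (centeredSubspace n)).map (fun y => scaledCenter τ μ + y) := by
        rw [hcomp, ← Measure.map_map (by fun_prop) (by fun_prop),
          ← Measure.map_map (by fun_prop) (by fun_prop), stdGaussianPi, map_pi_eq_stdGaussian,
          map_smul_orthogonalProjectionOnto_stdGaussian hτ hS]

lemma euclNorm_eq_norm (x : Fin n → ℝ) : euclNorm x = ‖WithLp.toLp 2 x‖ := by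
  simp [euclNorm, EuclideanSpace.norm_eq]

lemma dotProduct_eq_inner_toLp (x y : Fin n → ℝ) :
    x ⬝ᵥ y = ⟪WithLp.toLp 2 x, WithLp.toLp 2 y⟫ := by
  rw [EuclideanSpace.inner_toLp_toLp, star_trivial, dotProduct_comm]

lemma toLp_centerMat_mulVec_eq_smul (hτ : τ ≠ 0) (z : Fin n → ℝ) :
    WithLp.toLp 2 (centerMat n *ᵥ z) = τ • (scaledCenter τ z : EuclideanSpace ℝ (Fin n)) := by
  rw [toLp_centerMat_mulVec, scaledCenter, Submodule.coe_smul, smul_inv_smul₀ hτ]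

lemma euclNorm_centerMat_mulVec (hτ : 0 < τ) (z : Fin n → ℝ) :
    euclNorm (centerMat n *ᵥ z) = τ * ‖scaledCenter τ z‖ := by
  rw [euclNorm_eq_norm, toLp_centerMat_mulVec_eq_smul hτ.ne', norm_smul,
    Real.norm_of_nonneg hτ.le, Submodule.coe_norm]

lemma toLp_chi (hτ : 0 < τ) (z : Fin n → ℝ) :
    WithLp.toLp 2 (chi z) = ↑(‖scaledCenter τ z‖⁻¹ • scaledCenter τ z) := by
  rw [chi, WithLp.toLp_smul, euclNorm_centerMat_mulVec hτ, toLp_centerMat_mulVec_eq_smul hτ.ne',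
    smul_smul, _root_.mul_inv_rev, inv_mul_cancel_right₀ hτ.ne', Submodule.coe_smul]

lemma dotProduct_chi (hτ : 0 < τ) (θ : centeredSubspace n) (z : Fin n → ℝ) :
    (θ : EuclideanSpace ℝ (Fin n)).ofLp ⬝ᵥ chi z =
      ⟪θ, scaledCenter τ z⟫ / ‖scaledCenter τ z‖ := by
  rw [dotProduct_eq_inner_toLp, toLp_chi hτ, WithLp.toLp_ofLp, ← Submodule.coe_inner,
    real_inner_smul_right, inv_mul_eq_div]

lemma identDistrib_dotProduct_chi {Ω : Type*} [MeasurableSpace Ω] {P : Measure Ω}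
    {Z : Ω → Fin n → ℝ} {μ : Fin n → ℝ} {S : Matrix (Fin n) (Fin n) ℝ} (hτ : 0 < τ)
    (hZ : IsGaussianVec P Z μ S) (hS : centerMat n * S * centerMat n = τ ^ 2 • centerMat n)
    (θ : centeredSubspace n) :
    IdentDistrib (fun ω => (θ : EuclideanSpace ℝ (Fin n)).ofLp ⬝ᵥ chi (Z ω))
      (fun x => ⟪θ, scaledCenter τ μ + x⟫ / ‖scaledCenter τ μ + x‖) P
      (stdGaussian (centeredSubspace n)) := by
  simp_rw [dotProduct_chi hτ]
  exact (identDistrib_scaledCenter hτ.ne' hZ hS).comp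
    (u := fun y => ⟪θ, y⟫ / ‖y‖) (by fun_prop)

lemma centerMat_mul_Ximat_mul_centerMat (hn : n ≠ 0) (σ : ℝ) {ρ : ℝ} (hρ : ρ ≤ 1) :
    centerMat n * (σ ^ 2 • Ximat n ρ) * centerMat n = (σ * √(1 - ρ)) ^ 2 • centerMat n := by
  have hn' : (n : ℝ) ≠ 0 := Nat.cast_ne_zero.2 hn
  set J : Matrix (Fin n) (Fin n) ℝ := Matrix.of fun _ _ => 1 with hJ
  have hJJ : J * J = (n : ℝ) • J := by
    ext; simp [hJ, Matrix.mul_apply]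
  have hcenterJ : centerMat n * J = 0 := by
    rw [centerMat, sub_mul, one_mul, smul_mul_assoc, hJJ, inv_smul_smul₀ hn', sub_self]
  have hX : Ximat n ρ = (1 - ρ) • (1 : Matrix (Fin n) (Fin n) ℝ) + ρ • J := by
    ext i j
    by_cases hij : i = j <;> simp [Ximat, hJ, hij]
  have hidem : centerMat n * centerMat n = centerMat n := by
    nth_rw 2 [centerMat]
    rw [mul_sub, mul_smul_comm, hcenterJ, mul_one, smul_zero, sub_zero]
  rw [hX, mul_pow, Real.sq_sqrt (sub_nonneg.2 hρ)]
  simp only [mul_add, mul_smul_comm, smul_mul_assoc, hcenterJ, mul_one, hidem,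
    smul_zero, add_zero, smul_smul]

end Centering

theorem stmt19_general {Ω : Type*} [MeasurableSpace Ω] (P : Measure Ω) {n : ℕ} {τ : ℝ}
    (hτ : 0 < τ) (S : Matrix (Fin n) (Fin n) ℝ)
    (hS : centerMat n * S * centerMat n = τ ^ 2 • centerMat n)
    (μ : Fin n → ℝ) (Z : Ω → Fin n → ℝ) (hgauss : IsGaussianVec P Z μ S)
    (hPμ : (centerMat n).mulVec μ ≠ 0) :
    ∀ lam : ℝ, 0 ≤ lam →
      (euclNorm (chi μ) = 1 ∧ (∑ i, chi μ i) = 0) ∧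
      ((∫ ω, chi μ ⬝ᵥ chi (Z ω) ∂P) -
          lam * variance (fun ω => chi μ ⬝ᵥ chi (Z ω)) P =
        varrho (n - 1) (euclNorm ((centerMat n).mulVec μ) / τ) -
          lam * fFun (n - 1) (euclNorm ((centerMat n).mulVec μ) / τ)) ∧
      ∀ θ : Fin n → ℝ, euclNorm θ = 1 → (∑ i, θ i) = 0 →
        (∫ ω, θ ⬝ᵥ chi (Z ω) ∂P) - lam * variance (fun ω => θ ⬝ᵥ chi (Z ω)) P ≤
          varrho (n - 1) (euclNorm ((centerMat n).mulVec μ) / τ) -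
            lam * fFun (n - 1) (euclNorm ((centerMat n).mulVec μ) / τ) := by
  intro lam hlam
  set ν := scaledCenter τ μ
  have hν : ν ≠ 0 := fun h => hPμ <| (WithLp.toLp_eq_zero 2).1 <| by
    rw [toLp_centerMat_mulVec_eq_smul hτ.ne', show scaledCenter τ μ = 0 from h,
      Submodule.coe_zero, smul_zero]
  have hn : n ≠ 0 := by
    rintro rfl
    exact hPμ (Subsingleton.elim _ _)
  have hd : Module.finrank ℝ (centeredSubspace n) ≠ 0 :=
    (Module.finrank_pos_iff_exists_ne_zero.2 ⟨ν, hν⟩).ne'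
  have hchi : chi μ = (↑(‖ν‖⁻¹ • ν) : EuclideanSpace ℝ (Fin n)).ofLp :=
    congrArg WithLp.ofLp (toLp_chi hτ μ)
  have hlaw := identDistrib_dotProduct_chi hτ hgauss hS
  rw [euclNorm_centerMat_mulVec hτ, mul_div_cancel_left₀ _ hτ.ne', ← finrank_centeredSubspace hn]
  refine ⟨⟨?_, ?_⟩, ?_, fun θ hθ hθ₀ => ?_⟩
  · rw [euclNorm_eq_norm, toLp_chi hτ, Submodule.norm_coe]
    exact norm_smul_inv_norm (𝕜 := ℝ) hν
  · rw [← toLp_mem_centeredSubspace, toLp_chi hτ]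
    exact Subtype.prop _
  · rw [hchi, (hlaw _).integral_eq, (hlaw _).variance_eq,
      integral_sub_variance_inner_div_norm_stdGaussian_eq hν]
  · set θ' : centeredSubspace n := ⟨WithLp.toLp 2 θ, toLp_mem_centeredSubspace.2 hθ₀⟩
    have hθ' : ‖θ'‖ = 1 := (euclNorm_eq_norm θ).symm.trans hθ
    rw [(hlaw θ').integral_eq, (hlaw θ').variance_eq]
    exact integral_sub_variance_inner_div_norm_stdGaussian_le hd hθ' ν hlam

/-- in the homoscedastic world `θ* = χ(μ)` solves the
mean–variance optimization for every `λ ≥ 0`, with the stated optimal value. -/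
theorem stmt19 {Ω : Type*} [MeasurableSpace Ω] (P : Measure Ω) [IsProbabilityMeasure P]
    {n : ℕ} (hn : 3 ≤ n) (σ ρ : ℝ) (hσ : 0 < σ)
    (hρ₁ : -(1 / (n : ℝ)) < ρ) (hρ₂ : ρ < 1)
    (μ : Fin n → ℝ) (Z : Ω → Fin n → ℝ)
    (hgauss : IsGaussianVec P Z μ (σ ^ 2 • Ximat n ρ))
    (hPμ : (centerMat n).mulVec μ ≠ 0) :
    ∀ lam : ℝ, 0 ≤ lam →
      (euclNorm (chi μ) = 1 ∧ (∑ i, chi μ i) = 0) ∧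
      ((∫ ω, chi μ ⬝ᵥ chi (Z ω) ∂P) -
          lam * variance (fun ω => chi μ ⬝ᵥ chi (Z ω)) P =
        varrho (n - 1) (euclNorm ((centerMat n).mulVec μ) / (σ * Real.sqrt (1 - ρ))) -
          lam * fFun (n - 1)
            (euclNorm ((centerMat n).mulVec μ) / (σ * Real.sqrt (1 - ρ)))) ∧
      ∀ θ : Fin n → ℝ, euclNorm θ = 1 → (∑ i, θ i) = 0 →
        (∫ ω, θ ⬝ᵥ chi (Z ω) ∂P) - lam * variance (fun ω => θ ⬝ᵥ chi (Z ω)) P ≤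
          varrho (n - 1) (euclNorm ((centerMat n).mulVec μ) / (σ * Real.sqrt (1 - ρ))) -
            lam * fFun (n - 1)
              (euclNorm ((centerMat n).mulVec μ) / (σ * Real.sqrt (1 - ρ))) :=
  stmt19_general P (mul_pos hσ (Real.sqrt_pos.2 (sub_pos.2 hρ₂))) _
    (centerMat_mul_Ximat_mul_centerMat (by omega) σ hρ₂.le) μ Z hgauss hPμ
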